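/- Let s ≥ 2 and let f : [-1,1] → ℝ be a continuous function of class X^s. Then there is a constant C > 0 (depending only on f and s) such that for every n ≥ 2 the error of the n-point Gauss rule satisfies |E_n^G(f)| ≤ C · n^{-s-1} · log n. -/

import Mathlib

/-- The `m`-th Chebyshev coefficient of `f`:
`a_m = (2/π) ∫_0^π f(cos θ) cos(mθ) dθ`. -/
noncomputable def chebCoeff (f : ℝ → ℝ) (m : ℕ) : ℝ :=
  (2 / Real.pi) * ∫ θ in (0:ℝ)..Real.pi, f (Real.cos θ) * Real.cos (m * θ)

/-!
Since the rule is exact on polynomials of degree below `2n`, its nodes are the zeros of a Legendre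
polynomial. The Liouville transform turns the Legendre equation into `y'' = -q y` with `q` close to
`(n + 1/2)²`, and comparison with a pure oscillation shows that every node `x` is nearly a zero of
`T_{2n+1}`: `|T_{2n+1}(x)| √(1 - x²) ≤ 1 / (2n + 1)`. Hence `∑ w_k |T_{2n+1}(x_k)| = O(log n / n)`.

Writing `N = 2n + 1`, the identity `T_{N+m} + T_{N-m} = 2 T_N T_m` now makes the quadrature values
of `T_m` repeat, up to sign and a small error, under `m ↦ m + 2N`, so that the errors on `T_m` for
`2Nj ≤ m < 2N(j+1)` add up to `O((j + 1) log n)`. Summation against Chebyshev coefficients of size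
`m^{-s-1}` gives the rate `n^{-s-1} log n ∑ (j + 1)^{-s}`, the series being convergent for `s > 1`.
-/

section

open Polynomial Real

/-! ### Orthogonality and the Legendre differential equation -/

/-- The linear functional `p ↦ ∫_{-1}^1 p(t) dt` on polynomials. -/
noncomputable def polyIntegral : ℝ[X] →ₗ[ℝ] ℝ where
  toFun p := ∫ t in (-1 : ℝ)..1, p.eval t
  map_add' p q := by
    simpa only [eval_add] using intervalIntegral.integral_add
      (p.continuous.intervalIntegrable _ _) (q.continuous.intervalIntegrable _ _)
  map_smul' c p := by
    simp only [eval_smul, smul_eq_mul, intervalIntegral.integral_const_mul, RingHom.id_apply]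

lemma polyIntegral_apply (p : ℝ[X]) : polyIntegral p = ∫ t in (-1 : ℝ)..1, p.eval t := rfl

lemma polyIntegral_derivative (p : ℝ[X]) :
    polyIntegral (derivative p) = p.eval 1 - p.eval (-1) :=
  intervalIntegral.integral_eq_sub_of_hasDerivAt (fun t _ => p.hasDerivAt t)
    ((derivative p).continuous.intervalIntegrable _ _)

lemma polyIntegral_comp_neg_X (p : ℝ[X]) : polyIntegral (p.comp (-X)) = polyIntegral p := by
  simp only [polyIntegral_apply, eval_comp, eval_neg, eval_X]
  rw [intervalIntegral.integral_comp_neg (fun t => p.eval t), neg_neg]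

lemma polyIntegral_X_pow_two_mul (i : ℕ) :
    polyIntegral (X ^ (2 * i)) = 2 / (2 * i + 1) := by
  simp only [polyIntegral_apply, eval_pow, eval_X, integral_pow,
    (odd_two_mul_add_one i).neg_one_pow]
  push_cast
  norm_num

lemma eq_zero_of_polyIntegral_mul_self_eq_zero {p : ℝ[X]} (h : polyIntegral (p * p) = 0) :
    p = 0 := by
  by_contra hp
  obtain ⟨c, hc, hpc⟩ : ∃ c ∈ Set.Icc (-1 : ℝ) 1, ¬ p.IsRoot c := by
    by_contra! hroots
    exact hp (eq_zero_of_infinite_isRoot p ((Set.Icc_infinite (by norm_num)).mono hroots))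
  refine h.not_gt (intervalIntegral.integral_pos (by norm_num) (p * p).continuous.continuousOn
    (fun t _ => ?_) ⟨c, hc, ?_⟩)
  · simpa only [eval_mul] using mul_self_nonneg _
  · simpa only [eval_mul] using mul_self_pos.mpr hpc

/-- The Legendre differential operator `p ↦ d/dX ((1 - X²) dp/dX)`. -/
noncomputable def legendreOp (p : ℝ[X]) : ℝ[X] :=
  derivative ((1 - X ^ 2) * derivative p)

lemma coeff_legendreOp (p : ℝ[X]) (k : ℕ) :
    (legendreOp p).coeff k =
      (k + 1) * (k + 2) * p.coeff (k + 2) - k * (k + 1) * p.coeff k := by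
  rw [legendreOp, coeff_derivative, sub_mul, one_mul, coeff_sub, coeff_derivative]
  cases k with
  | zero => simp [coeff_X_pow_mul']; ring
  | succ k =>
    rw [show k + 1 + 1 = k + 2 from rfl, coeff_X_pow_mul, coeff_derivative]
    push_cast
    ring

lemma degree_legendreOp_le (p : ℝ[X]) : (legendreOp p).degree ≤ p.degree := by
  rw [degree_le_iff_coeff_zero]
  intro k hk
  have hk2 : p.degree < ↑(k + 2) := hk.trans (by exact_mod_cast Nat.lt_add_of_pos_right two_pos)
  rw [coeff_legendreOp, coeff_eq_zero_of_degree_lt hk, coeff_eq_zero_of_degree_lt hk2]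
  ring

lemma polyIntegral_mul_legendreOp_comm (p q : ℝ[X]) :
    polyIntegral (p * legendreOp q) = polyIntegral (q * legendreOp p) := by
  have wronskian : p * legendreOp q - q * legendreOp p =
      derivative ((1 - X ^ 2) * (p * derivative q - q * derivative p)) := by
    simp only [legendreOp, derivative_mul, derivative_sub, derivative_one, derivative_X_pow]
    ring
  rw [← sub_eq_zero, ← map_sub, wronskian, polyIntegral_derivative]
  simp

lemma eq_zero_of_legendreOp_eq_smul {p : ℝ[X]} {c : ℝ} (h : legendreOp p = c • p)
    (h0 : p.coeff 0 = 0) (h1 : p.coeff 1 = 0) : p = 0 := by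
  ext k
  induction k using Nat.twoStepInduction with
  | zero => exact h0
  | one => exact h1
  | more k hk _ =>
    have hrec := congrArg (coeff · k) h
    simp only [coeff_legendreOp, coeff_smul, hk, coeff_zero, smul_zero, mul_zero, sub_zero] at hrec
    exact (mul_eq_zero.mp hrec).resolve_left (by positivity)

/-- `p` is the monic Legendre polynomial of its degree, characterised by orthogonality on `[-1, 1]`
to all polynomials of smaller degree. -/
structure IsMonicLegendre (p : ℝ[X]) : Prop where
  monic : p.Monic
  orthogonal : ∀ q : ℝ[X], q.degree < p.degree → polyIntegral (p * q) = 0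

namespace IsMonicLegendre

variable {p q : ℝ[X]}

lemma eq_of_degree_eq (hp : IsMonicLegendre p) (hq : IsMonicLegendre q)
    (hpq : p.degree = q.degree) : p = q := by
  have hdeg : (p - q).degree < p.degree :=
    degree_sub_lt_left hpq hp.monic.ne_zero (by rw [hp.monic, hq.monic])
  refine sub_eq_zero.mp (eq_zero_of_polyIntegral_mul_self_eq_zero ?_)
  rw [sub_mul, map_sub, hp.orthogonal _ hdeg, hq.orthogonal _ (hpq ▸ hdeg), sub_zero]

lemma neg_one_pow_mul_comp_neg_X (hp : IsMonicLegendre p) :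
    IsMonicLegendre ((-1) ^ p.natDegree * p.comp (-X)) where
  monic := hp.monic.neg_one_pow_natDegree_mul_comp_neg_X
  orthogonal q hq := by
    have hq' : ((-1) ^ p.natDegree * q.comp (-X)).degree < p.degree := by
      simpa [degree_mul, degree_pow] using hq
    rw [← polyIntegral_comp_neg_X, ← hp.orthogonal _ hq']
    congr 1
    simp only [mul_comp, pow_comp, neg_comp, one_comp, comp_neg_X_comp_neg_X]
    ring

lemma comp_neg_X (hp : IsMonicLegendre p) : p.comp (-X) = (-1) ^ p.natDegree * p := by
  have h := hp.eq_of_degree_eq hp.neg_one_pow_mul_comp_neg_X (by simp [degree_mul, degree_pow])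
  calc p.comp (-X) = (-1) ^ p.natDegree * ((-1) ^ p.natDegree * p.comp (-X)) := by
        rw [← mul_assoc, ← mul_pow, neg_one_mul, neg_neg, one_pow, one_mul]
    _ = (-1) ^ p.natDegree * p := by rw [← h]

lemma eval_neg_eq (hp : IsMonicLegendre p) (t : ℝ) :
    p.eval (-t) = (-1) ^ p.natDegree * p.eval t := by
  simpa using congrArg (eval t) hp.comp_neg_X

lemma eval_zero_eq_zero_or_eval_derivative_zero_eq_zero (hp : IsMonicLegendre p) :
    p.eval 0 = 0 ∨ (derivative p).eval 0 = 0 := by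
  rcases Nat.even_or_odd p.natDegree with heven | hodd
  · right
    have h := congrArg (fun r => (derivative r).eval 0) hp.comp_neg_X
    simp only [heven.neg_one_pow, one_mul, derivative_comp, derivative_neg, derivative_X, eval_mul,
      eval_neg, eval_one, eval_comp, eval_X, neg_zero] at h
    linarith
  · left
    have h := hp.eval_neg_eq 0
    rw [hodd.neg_one_pow, neg_zero] at h
    linarith

theorem legendreOp_eq_smul (hp : IsMonicLegendre p) :
    legendreOp p = -(p.natDegree * (p.natDegree + 1) : ℝ) • p := by
  set n := p.natDegree
  set r := legendreOp p + (n * (n + 1) : ℝ) • p with hr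
  have hdeg : r.degree < p.degree := by
    rw [degree_eq_natDegree hp.monic.ne_zero, degree_lt_iff_coeff_zero]
    intro k hk
    have hk2 : p.coeff (k + 2) = 0 := coeff_eq_zero_of_natDegree_lt (by omega)
    rw [hr, coeff_add, coeff_legendreOp, coeff_smul, hk2, smul_eq_mul]
    rcases hk.eq_or_lt with rfl | hlt
    · ring
    · rw [coeff_eq_zero_of_natDegree_lt hlt]
      ring
  have hrr : polyIntegral (r * r) = 0 := calc
    polyIntegral (r * r)
      = polyIntegral (r * legendreOp p) + n * (n + 1) * polyIntegral (p * r) := by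
        conv_lhs => enter [2, 2]; rw [hr]
        rw [mul_add, map_add, mul_smul_comm, map_smul, smul_eq_mul, mul_comm r p]
    _ = polyIntegral (p * legendreOp r) + n * (n + 1) * polyIntegral (p * r) := by
        rw [polyIntegral_mul_legendreOp_comm]
    _ = 0 := by
        rw [hp.orthogonal _ ((degree_legendreOp_le r).trans_lt hdeg), hp.orthogonal r hdeg]
        ring
  rw [neg_smul]
  exact eq_neg_of_add_eq_zero_left (eq_zero_of_polyIntegral_mul_self_eq_zero hrr)

lemma eval_zero_ne_zero_or_eval_derivative_zero_ne_zero (hp : IsMonicLegendre p) :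
    p.eval 0 ≠ 0 ∨ (derivative p).eval 0 ≠ 0 := by
  by_contra! h
  refine hp.monic.ne_zero (eq_zero_of_legendreOp_eq_smul hp.legendreOp_eq_smul ?_ ?_)
  · rw [coeff_zero_eq_eval_zero, h.1]
  · have h1 := h.2
    rw [← coeff_zero_eq_eval_zero, coeff_derivative] at h1
    simpa using h1

end IsMonicLegendre

/-! ### Sturm comparison with a pure oscillation -/

section Comparison

variable {y y' q q' G : ℝ → ℝ} {a b l : ℝ}

/-- Sonin's monotonicity argument. -/
lemma monotoneOn_sq_add_sq_div
    (hy : ∀ t ∈ Set.Icc a b, HasDerivAt y (y' t) t)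
    (hy' : ∀ t ∈ Set.Icc a b, HasDerivAt y' (-(q t * y t)) t)
    (hq : ∀ t ∈ Set.Icc a b, HasDerivAt q (q' t) t)
    (hq_pos : ∀ t ∈ Set.Icc a b, 0 < q t) (hq' : ∀ t ∈ Set.Icc a b, q' t ≤ 0) :
    MonotoneOn (fun t => y t ^ 2 + y' t ^ 2 / q t) (Set.Icc a b) := by
  have hderiv : ∀ t ∈ Set.Icc a b, HasDerivAt (fun t => y t ^ 2 + y' t ^ 2 / q t)
      (-q' t * (y' t / q t) ^ 2) t := by
    intro t ht
    have hqt := (hq_pos t ht).ne'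
    refine (((hy t ht).pow 2).add (((hy' t ht).pow 2).div (hq t ht) hqt)).congr_deriv ?_
    simp only [Pi.pow_apply]
    field_simp
    ring
  exact monotoneOn_of_hasDerivWithinAt_nonneg (convex_Icc a b)
    (fun t ht => (hderiv t ht).continuousAt.continuousWithinAt)
    (fun t ht => (hderiv t (interior_subset ht)).hasDerivWithinAt)
    (fun t ht => mul_nonneg (neg_nonneg.mpr (hq' t (interior_subset ht))) (sq_nonneg _))

/-- Variation of constants: the left side at `b` vanishes for `q = l²`. -/
lemma abs_mul_cos_sub_mul_sin_le {M : ℝ} (hab : a ≤ b)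
    (hy : ∀ t ∈ Set.Icc a b, HasDerivAt y (y' t) t)
    (hy' : ∀ t ∈ Set.Icc a b, HasDerivAt y' (-(q t * y t)) t)
    (hG : ∀ t ∈ Set.Icc a b, HasDerivAt G (q t - l ^ 2) t)
    (hlq : ∀ t ∈ Set.Icc a b, l ^ 2 ≤ q t) (hM : ∀ t ∈ Set.Icc a b, |y t| ≤ M) (hya : y a = 0) :
    |l * (y b * cos (l * (b - a))) - y' b * sin (l * (b - a))| ≤ M * (G b - G a) := by
  set W : ℝ → ℝ := fun t => l * (y t * cos (l * (t - a))) - y' t * sin (l * (t - a)) with hW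
  have hW' : ∀ t ∈ Set.Icc a b,
      HasDerivAt W ((q t - l ^ 2) * (y t * sin (l * (t - a)))) t := by
    intro t ht
    have hphase : HasDerivAt (fun t => l * (t - a)) (l * 1) t :=
      ((hasDerivAt_id t).sub_const a).const_mul l
    refine ((((hy t ht).mul hphase.cos).const_mul l).sub
      ((hy' t ht).mul hphase.sin)).congr_deriv ?_
    ring
  have hB' : ∀ t ∈ Set.Icc a b, HasDerivAt (fun t => M * (G t - G a)) (M * (q t - l ^ 2)) t :=
    fun t ht => ((hG t ht).sub_const _).const_mul M
  refine image_norm_le_of_norm_deriv_right_le_deriv_boundary'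
    (fun t ht => (hW' t ht).continuousAt.continuousWithinAt)
    (fun t ht => (hW' t (Set.Ico_subset_Icc_self ht)).hasDerivWithinAt) (by simp [hW, hya])
    (fun t ht => (hB' t ht).continuousAt.continuousWithinAt)
    (fun t ht => (hB' t (Set.Ico_subset_Icc_self ht)).hasDerivWithinAt) (fun t ht => ?_)
    ⟨hab, le_rfl⟩
  have ht := Set.Ico_subset_Icc_self ht
  have hgap : 0 ≤ q t - l ^ 2 := sub_nonneg.mpr (hlq t ht)
  rw [norm_eq_abs, abs_mul, abs_of_nonneg hgap, abs_mul, mul_comm]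
  gcongr
  exact (mul_le_of_le_one_right (abs_nonneg _) (abs_sin_le_one _)).trans (hM t ht)

/-- The phase `l (b - a)` is thus close to a multiple of `π / 2`. -/
theorem mul_abs_sin_mul_cos_le (hab : a ≤ b) (hl : 0 < l)
    (hy : ∀ t ∈ Set.Icc a b, HasDerivAt y (y' t) t)
    (hy' : ∀ t ∈ Set.Icc a b, HasDerivAt y' (-(q t * y t)) t)
    (hq : ∀ t ∈ Set.Icc a b, HasDerivAt q (q' t) t) (hq' : ∀ t ∈ Set.Icc a b, q' t ≤ 0)
    (hG : ∀ t ∈ Set.Icc a b, HasDerivAt G (q t - l ^ 2) t)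
    (hlq : ∀ t ∈ Set.Icc a b, l ^ 2 ≤ q t) (hya : y a = 0)
    (hb : y b = 0 ∨ y' b = 0) (hb_ne : y b ≠ 0 ∨ y' b ≠ 0) :
    l * |sin (l * (b - a)) * cos (l * (b - a))| ≤ G b - G a := by
  set β := l * (b - a)
  have hq_pos : ∀ t ∈ Set.Icc a b, 0 < q t := fun t ht => (pow_pos hl 2).trans_le (hlq t ht)
  have hb_mem : b ∈ Set.Icc a b := ⟨hab, le_rfl⟩
  have hqb := hq_pos b hb_mem
  set E := y b ^ 2 + y' b ^ 2 / q b with hE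
  have hE_pos : 0 < E := by
    rcases hb_ne with h | h <;> positivity
  have hM : ∀ t ∈ Set.Icc a b, |y t| ≤ √E := fun t ht => by
    refine abs_le_sqrt (le_trans ?_ (monotoneOn_sq_add_sq_div hy hy' hq hq_pos hq' ht hb_mem ht.2))
    exact le_add_of_nonneg_right (div_nonneg (sq_nonneg _) (hq_pos t ht).le)
  have hW := abs_mul_cos_sub_mul_sin_le hab hy hy' hG hlq hM hya
  have hlM : √E * (l * |sin β * cos β|) ≤ |l * (y b * cos β) - y' b * sin β| := by
    rw [abs_mul]
    rcases hb with hb | hb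
    · have hamp : √E * l ≤ |y' b| := by
        refine le_of_sq_le_sq ?_ (abs_nonneg _)
        rw [mul_pow, sq_sqrt hE_pos.le, sq_abs, hE, hb, div_eq_mul_inv]
        calc (0 ^ 2 + y' b ^ 2 * (q b)⁻¹) * l ^ 2 = y' b ^ 2 * (l ^ 2 / q b) := by ring
          _ ≤ y' b ^ 2 := mul_le_of_le_one_right (sq_nonneg _)
              ((div_le_one hqb).mpr (hlq b hb_mem))
      rw [hb, zero_mul, mul_zero, zero_sub, abs_neg, abs_mul, ← mul_assoc]
      gcongr
      exact mul_le_of_le_one_right (abs_nonneg _) (abs_cos_le_one _)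
    · have hamp : √E = |y b| := by simp [hE, hb, sqrt_sq_eq_abs]
      rw [hb, zero_mul, sub_zero, abs_mul, abs_mul, abs_of_pos hl, hamp, mul_left_comm]
      gcongr
      exact mul_le_of_le_one_left (abs_nonneg _) (abs_sin_le_one _)
  exact le_of_mul_le_mul_left (hlM.trans hW) (sqrt_pos.mpr hE_pos)

end Comparison

/-! ### Zeros of Legendre polynomials -/

/-- The Liouville transform `√(sin θ) p(cos θ)`, which removes the first-order term from the
Legendre equation. -/
noncomputable def liouville (p : ℝ[X]) (θ : ℝ) : ℝ := √(sin θ) * p.eval (cos θ)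

/-- The derivative of `liouville p` where `sin θ > 0`. -/
noncomputable def liouvilleDeriv (p : ℝ[X]) (θ : ℝ) : ℝ :=
  cos θ / (2 * √(sin θ)) * p.eval (cos θ) - √(sin θ) ^ 3 * (derivative p).eval (cos θ)

section Liouville

variable {p : ℝ[X]} {θ : ℝ}

lemma hasDerivAt_eval_cos (p : ℝ[X]) (θ : ℝ) :
    HasDerivAt (fun θ => p.eval (cos θ)) ((derivative p).eval (cos θ) * -sin θ) θ :=
  (p.hasDerivAt (cos θ)).comp θ (hasDerivAt_cos θ)

lemma hasDerivAt_liouville (p : ℝ[X]) (hθ : 0 < sin θ) :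
    HasDerivAt (liouville p) (liouvilleDeriv p θ) θ := by
  refine (((hasDerivAt_sin θ).sqrt hθ.ne').mul (hasDerivAt_eval_cos p θ)).congr_deriv ?_
  rw [liouvilleDeriv]
  linear_combination √(sin θ) * (derivative p).eval (cos θ) * sq_sqrt hθ.le

lemma hasDerivAt_liouvilleDeriv {ν : ℝ} (hp : legendreOp p = -(ν * (ν + 1)) • p)
    (hθ : 0 < sin θ) :
    HasDerivAt (liouvilleDeriv p)
      (-(((ν + 1 / 2) ^ 2 + 1 / (4 * sin θ ^ 2)) * liouville p θ)) θ := by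
  have hode : sin θ ^ 2 * (derivative (derivative p)).eval (cos θ) -
      2 * cos θ * (derivative p).eval (cos θ) + ν * (ν + 1) * p.eval (cos θ) = 0 := by
    have h := congrArg (eval (cos θ)) hp
    simp only [legendreOp, derivative_mul, derivative_sub, derivative_one, derivative_X_pow,
      Nat.cast_ofNat, map_ofNat, eval_add, eval_mul, eval_sub, eval_zero, eval_one, eval_pow,
      eval_X, eval_ofNat, eval_smul, smul_eq_mul] at h
    rw [sin_sq]
    linear_combination h
  have hroot : 0 < √(sin θ) := sqrt_pos.mpr hθ
  have hsq : √(sin θ) ^ 2 = sin θ := sq_sqrt hθ.le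
  have hcos : cos θ ^ 2 = 1 - √(sin θ) ^ 4 := by
    rw [cos_sq']
    linear_combination (√(sin θ) ^ 2 + sin θ) * hsq
  have hS := (hasDerivAt_sin θ).sqrt hθ.ne'
  have hquot := (hasDerivAt_cos θ).div (hS.const_mul 2) (by positivity)
  refine ((hquot.mul (hasDerivAt_eval_cos p θ)).sub
    ((hS.pow 3).mul (hasDerivAt_eval_cos (derivative p) θ))).congr_deriv ?_
  rw [liouville]
  simp only [Pi.pow_apply, Pi.div_apply, Nat.cast_ofNat]
  generalize √(sin θ) = S at *
  rw [← hsq] at hode ⊢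
  field_simp
  rw [hcos]
  linear_combination (16 * S ^ 4) * hode

lemma hasDerivAt_neg_cot_div_four (hθ : sin θ ≠ 0) :
    HasDerivAt (fun θ => -(cos θ / sin θ) / 4) (1 / (4 * sin θ ^ 2)) θ := by
  refine (((hasDerivAt_cos θ).div (hasDerivAt_sin θ) hθ).neg.div_const 4).congr_deriv ?_
  field_simp
  linear_combination sin_sq_add_cos_sq θ

lemma hasDerivAt_const_add_one_div_four_mul_sin_sq (c : ℝ) (hθ : sin θ ≠ 0) :
    HasDerivAt (fun θ => c + 1 / (4 * sin θ ^ 2)) (-(cos θ / (2 * sin θ ^ 3))) θ := by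
  refine (((hasDerivAt_const θ (1 : ℝ)).div (((hasDerivAt_sin θ).pow 2).const_mul 4)
    (mul_ne_zero four_ne_zero (pow_ne_zero 2 hθ))).const_add c).congr_deriv ?_
  simp only [Pi.pow_apply, Nat.cast_ofNat]
  field_simp
  ring

lemma abs_cos_two_mul_add_one_mul (n : ℕ) (θ : ℝ) :
    |cos ((2 * n + 1) * θ)| =
      2 * |sin ((n + 1 / 2) * (π / 2 - θ)) * cos ((n + 1 / 2) * (π / 2 - θ))| := by
  have hphase : (2 * n + 1) * θ = π / 2 - 2 * ((n + 1 / 2) * (π / 2 - θ)) + n * π := by ring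
  rw [hphase, cos_add_nat_mul_pi, cos_pi_div_two_sub, sin_two_mul, abs_mul, abs_pow, abs_neg,
    abs_one, one_pow, one_mul, mul_assoc, abs_mul 2, abs_two]

end Liouville

namespace IsMonicLegendre

variable {p : ℝ[X]} {θ t : ℝ}

lemma abs_cos_mul_sin_le (hp : IsMonicLegendre p) (hθ₀ : 0 < θ) (hθ : θ ≤ π / 2)
    (hroot : p.eval (cos θ) = 0) :
    |cos ((2 * p.natDegree + 1) * θ)| * sin θ ≤ 1 / (2 * p.natDegree + 1) := by
  set l : ℝ := p.natDegree + 1 / 2 with hl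
  have hl_pos : 0 < l := by positivity
  have hsin : ∀ t ∈ Set.Icc θ (π / 2), 0 < sin t := fun t ht =>
    sin_pos_of_pos_of_lt_pi (hθ₀.trans_le ht.1) (by linarith [ht.2, pi_pos])
  have hcos : ∀ t ∈ Set.Icc θ (π / 2), 0 ≤ cos t := fun t ht =>
    cos_nonneg_of_neg_pi_div_two_le_of_le (by linarith [ht.1, pi_pos]) ht.2
  have hmid : liouville p (π / 2) = p.eval 0 ∧
      liouvilleDeriv p (π / 2) = -(derivative p).eval 0 := by
    simp [liouville, liouvilleDeriv]
  have hβ := mul_abs_sin_mul_cos_le hθ hl_pos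
    (fun t ht => hasDerivAt_liouville p (hsin t ht))
    (fun t ht => hasDerivAt_liouvilleDeriv hp.legendreOp_eq_smul (hsin t ht))
    (fun t ht => hasDerivAt_const_add_one_div_four_mul_sin_sq (l ^ 2) (hsin t ht).ne')
    (fun t ht => neg_nonpos.mpr
      (div_nonneg (hcos t ht) (mul_nonneg zero_le_two (pow_nonneg (hsin t ht).le 3))))
    (fun t ht => (hasDerivAt_neg_cot_div_four (hsin t ht).ne').congr_deriv (by ring))
    (fun t _ => le_add_of_nonneg_right (by positivity)) (by rw [liouville, hroot, mul_zero])
    (by simpa only [hmid, neg_eq_zero] using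
      hp.eval_zero_eq_zero_or_eval_derivative_zero_eq_zero)
    (by simpa only [hmid, ne_eq, neg_eq_zero] using
      hp.eval_zero_ne_zero_or_eval_derivative_zero_ne_zero)
  have hsinθ := hsin θ ⟨le_rfl, hθ⟩
  rw [abs_cos_two_mul_add_one_mul, ← hl, le_div_iff₀ (by positivity)]
  calc 2 * |sin (l * (π / 2 - θ)) * cos (l * (π / 2 - θ))| * sin θ * (2 * p.natDegree + 1)
      = 4 * (l * |sin (l * (π / 2 - θ)) * cos (l * (π / 2 - θ))|) * sin θ := by
        rw [hl]
        ring
    _ ≤ 4 * (-(cos (π / 2) / sin (π / 2)) / 4 - -(cos θ / sin θ) / 4) * sin θ := by gcongr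
    _ = cos θ := by
        rw [cos_pi_div_two]
        field_simp
        ring
    _ ≤ 1 := cos_le_one θ

theorem abs_eval_T_mul_sqrt_le (hp : IsMonicLegendre p) (ht : t ∈ Set.Icc (-1) 1)
    (hroot : p.eval t = 0) :
    |(Chebyshev.T ℝ (2 * p.natDegree + 1)).eval t| * √(1 - t ^ 2) ≤
      1 / (2 * p.natDegree + 1) := by
  wlog ht₀ : 0 ≤ t generalizing t
  · have h := this (t := -t) ⟨neg_le_neg ht.2, neg_le.mp ht.1⟩
      (by rw [hp.eval_neg_eq, hroot, mul_zero]) (by linarith)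
    rw [Chebyshev.T_eval_neg, abs_mul, neg_sq] at h
    simpa using h
  rcases ht.2.eq_or_lt with rfl | ht₁
  · simp only [one_pow, sub_self, sqrt_zero, mul_zero]
    positivity
  · have hcos : cos (arccos t) = t := cos_arccos ht.1 ht.2
    have h := hp.abs_cos_mul_sin_le (arccos_pos.mpr ht₁) (arccos_le_pi_div_two.mpr ht₀)
      (by rwa [hcos])
    have hcast : ((2 * p.natDegree + 1 : ℤ) : ℝ) = 2 * p.natDegree + 1 := by norm_cast
    rwa [sin_arccos, ← hcast, ← Chebyshev.T_real_cos, hcos, hcast] at h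

end IsMonicLegendre

/-! ### Gauss rules are nearly blind to `T_{2n+1}` -/

/-- `x` and `w` are the nodes and weights of the `n`-point Gauss–Legendre rule on `[-1, 1]`. -/
structure IsGaussRule {n : ℕ} (x w : Fin n → ℝ) : Prop where
  mem_Icc : ∀ k, x k ∈ Set.Icc (-1) 1
  weight_pos : ∀ k, 0 < w k
  exact_of_natDegree_le : ∀ p : ℝ[X], p.natDegree ≤ 2 * n - 1 →
    ∑ k, w k * p.eval (x k) = polyIntegral p

/-- Interpolates between the bound `c ≤ 1`, sharp near `y = 1`, and `c ≤ 1 / (n (1 - y))`. -/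
lemma natCast_mul_le_two_mul_geom_sum {n : ℕ} {y c : ℝ} (hy₀ : 0 ≤ y) (hy₁ : y ≤ 1) (hc : c ≤ 1)
    (hcy : n * (c * (1 - y)) ≤ 1) : n * c ≤ 2 * ∑ i ∈ Finset.range n, y ^ i := by
  set G := ∑ i ∈ Finset.range n, y ^ i
  have hG : 0 ≤ G := Finset.sum_nonneg fun i _ => pow_nonneg hy₀ i
  have hlast : n * y ^ n ≤ G := by
    simpa using Finset.card_nsmul_le_sum (Finset.range n) (y ^ ·) (y ^ n)
      fun i hi => pow_le_pow_of_le_one hy₀ hy₁ (Finset.mem_range.mp hi).le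
  calc n * c = c * (n * y ^ n) + G * (n * (c * (1 - y))) := by
        linear_combination -n * c * mul_neg_geom_sum y n
    _ ≤ 1 * G + G * 1 := by gcongr
    _ = 2 * G := by ring

namespace IsGaussRule

variable {n : ℕ} {x w : Fin n → ℝ}

lemma sum_weight (h : IsGaussRule x w) : ∑ k, w k = 2 := by
  have hone := h.exact_of_natDegree_le 1 (by simp)
  norm_num [polyIntegral_apply] at hone
  exact hone

lemma isMonicLegendre_nodal (h : IsGaussRule x w) :
    IsMonicLegendre (Lagrange.nodal Finset.univ x) where
  monic := Lagrange.nodal_monic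
  orthogonal q hq := by
    rcases eq_or_ne q 0 with rfl | hq₀
    · simp
    have hq' : q.natDegree < n := by
      simpa [Lagrange.degree_nodal, degree_eq_natDegree hq₀] using hq
    rw [← h.exact_of_natDegree_le]
    · refine Finset.sum_eq_zero fun k _ => ?_
      rw [eval_mul, Lagrange.eval_nodal_at_node (Finset.mem_univ k), zero_mul, mul_zero]
    · refine natDegree_mul_le.trans ?_
      rw [Lagrange.natDegree_nodal, Finset.card_fin]
      omega

lemma natCast_mul_abs_eval_T_le (h : IsGaussRule x w) (k : Fin n) :
    n * |(Chebyshev.T ℝ (2 * n + 1)).eval (x k)| ≤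
      2 * ∑ i ∈ Finset.range n, (X ^ (2 * i) : ℝ[X]).eval (x k) := by
  set c := |(Chebyshev.T ℝ (2 * n + 1)).eval (x k)|
  have hx : |x k| ≤ 1 := abs_le.mpr (h.mem_Icc k)
  have hx_sq : x k ^ 2 ≤ 1 := (sq_le_one_iff_abs_le_one _).mpr hx
  have hnode : c * √(1 - x k ^ 2) ≤ 1 / (2 * n + 1) := by
    simpa [Lagrange.natDegree_nodal] using h.isMonicLegendre_nodal.abs_eval_T_mul_sqrt_le
      (h.mem_Icc k) (Lagrange.eval_nodal_at_node (Finset.mem_univ k))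
  have hsqrt : 1 - x k ^ 2 ≤ √(1 - x k ^ 2) :=
    le_sqrt_of_sq_le (pow_le_of_le_one (by linarith) (by linarith [sq_nonneg (x k)]) two_ne_zero)
  have hdecay : n * (c * (1 - x k ^ 2)) ≤ 1 := calc
    n * (c * (1 - x k ^ 2)) ≤ (2 * n + 1) * (c * √(1 - x k ^ 2)) := by
      gcongr
      linarith
    _ ≤ (2 * n + 1) * (1 / (2 * n + 1)) := by gcongr
    _ = 1 := mul_one_div_cancel (by positivity)
  simpa only [eval_pow, eval_X, pow_mul] using natCast_mul_le_two_mul_geom_sum (sq_nonneg _) hx_sq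
    (Chebyshev.abs_eval_T_real_le_one _ hx) hdecay

theorem natCast_mul_sum_weight_mul_abs_eval_T_le (h : IsGaussRule x w) :
    n * ∑ k, w k * |(Chebyshev.T ℝ (2 * n + 1)).eval (x k)| ≤ 4 * (1 + log n) := by
  have hmoment : ∀ i ∈ Finset.range n, ∑ k, w k * (X ^ (2 * i) : ℝ[X]).eval (x k) ≤
      2 * ((i + 1 : ℕ) : ℝ)⁻¹ := by
    intro i hi
    rw [h.exact_of_natDegree_le _ (by rw [natDegree_X_pow]; have := Finset.mem_range.mp hi; omega),
      polyIntegral_X_pow_two_mul, ← div_eq_mul_inv]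
    push_cast
    gcongr
    linarith [(Nat.cast_nonneg i : (0 : ℝ) ≤ i)]
  calc n * ∑ k, w k * |(Chebyshev.T ℝ (2 * n + 1)).eval (x k)|
      = ∑ k, w k * (n * |(Chebyshev.T ℝ (2 * n + 1)).eval (x k)|) := by
        rw [Finset.mul_sum]
        exact Finset.sum_congr rfl fun k _ => mul_left_comm _ _ _
    _ ≤ ∑ k, w k * (2 * ∑ i ∈ Finset.range n, (X ^ (2 * i) : ℝ[X]).eval (x k)) := by
        exact Finset.sum_le_sum fun k _ =>
          mul_le_mul_of_nonneg_left (h.natCast_mul_abs_eval_T_le k) (h.weight_pos k).le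
    _ = 2 * ∑ i ∈ Finset.range n, ∑ k, w k * (X ^ (2 * i) : ℝ[X]).eval (x k) := by
        simp_rw [mul_left_comm _ (2 : ℝ), ← Finset.mul_sum]
        rw [Finset.sum_comm]
        simp_rw [Finset.mul_sum]
    _ ≤ 2 * ∑ i ∈ Finset.range n, 2 * ((i + 1 : ℕ) : ℝ)⁻¹ := by
        gcongr with i hi
        exact hmoment i hi
    _ ≤ 2 * (2 * (1 + log n)) := by
        rw [← Finset.mul_sum]
        gcongr
        simpa [harmonic] using harmonic_le_one_add_log n
    _ = 4 * (1 + log n) := by ring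

end IsGaussRule

/-! ### Quadrature of Chebyshev polynomials -/

lemma sq_sub_one_mul_polyIntegral_T (m : ℤ) :
    (m ^ 2 - 1) * polyIntegral (Chebyshev.T ℝ m) = -(1 + m.negOnePow) := by
  have hU := Chebyshev.two_mul_T_eq_U_sub_U ℝ (m - 2)
  rw [sub_add_cancel] at hU
  have hderiv : (2 * (m ^ 2 - 1) : ℝ) • Chebyshev.T ℝ m =
      derivative ((m - 1 : ℝ) • Chebyshev.T ℝ (m + 1) - (m + 1 : ℝ) • Chebyshev.T ℝ (m - 1)) := by
    rw [derivative_sub, derivative_smul, derivative_smul, Chebyshev.T_derivative_eq_U,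
      Chebyshev.T_derivative_eq_U, add_sub_cancel_right, sub_sub, one_add_one_eq_two]
    simp only [smul_eq_C_mul, map_mul, map_sub, map_add, map_pow, map_one, map_ofNat, map_intCast,
      Int.cast_add, Int.cast_sub, Int.cast_one]
    linear_combination ((m : ℝ[X]) ^ 2 - 1) * hU
  have h := congrArg polyIntegral hderiv
  rw [polyIntegral_derivative, map_smul, smul_eq_mul] at h
  simp only [eval_sub, eval_smul, Chebyshev.T_eval_one, Chebyshev.T_eval_neg_one, Int.negOnePow_add,
    Int.negOnePow_sub, Int.negOnePow_one, smul_eq_mul] at h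
  push_cast at h
  linarith

lemma abs_polyIntegral_T_le (m : ℕ) :
    |polyIntegral (Chebyshev.T ℝ m)| ≤ 8 * (((m + 1 : ℕ) : ℝ) ^ 2)⁻¹ := by
  have hformula := sq_sub_one_mul_polyIntegral_T m
  match m with
  | 0 => norm_num [polyIntegral_apply]
  | 1 => norm_num [polyIntegral_apply]
  | m + 2 =>
    set I := polyIntegral (Chebyshev.T ℝ (m + 2 : ℕ))
    have hnum : |(((m + 2 : ℕ) : ℝ) ^ 2 - 1) * I| ≤ 2 := by
      rw [Int.cast_natCast] at hformula
      rw [hformula]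
      rcases Int.units_eq_one_or ((m + 2 : ℕ) : ℤ).negOnePow with h | h <;>
        simp only [h] <;> norm_num
    have hm : (0 : ℝ) ≤ m := m.cast_nonneg
    have hpos : (0 : ℝ) < ((m + 2 : ℕ) : ℝ) ^ 2 - 1 := by push_cast; nlinarith
    rw [abs_mul, abs_of_pos hpos] at hnum
    rw [← div_eq_mul_inv, le_div_iff₀ (by positivity)]
    refine le_trans ?_ (show 4 * ((((m + 2 : ℕ) : ℝ) ^ 2 - 1) * |I|) ≤ 8 by linarith)
    rw [mul_comm, ← mul_assoc]
    gcongr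
    push_cast
    nlinarith

lemma sum_abs_polyIntegral_T_le (m K : ℕ) :
    ∑ r ∈ Finset.range K, |polyIntegral (Chebyshev.T ℝ (m + r : ℕ))| ≤ 16 := calc
  ∑ r ∈ Finset.range K, |polyIntegral (Chebyshev.T ℝ (m + r : ℕ))|
    ≤ ∑ r ∈ Finset.range K, 8 * (((m + r + 1 : ℕ) : ℝ) ^ 2)⁻¹ :=
      Finset.sum_le_sum fun r _ => abs_polyIntegral_T_le (m + r)
  _ = 8 * ∑ i ∈ Finset.Ioo m (m + 1 + K), ((i : ℝ) ^ 2)⁻¹ := by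
      have hIoo : Finset.Ioo m (m + 1 + K) = Finset.Ico (m + 1) (m + 1 + K) := rfl
      rw [hIoo, Finset.sum_Ico_eq_sum_range, add_tsub_cancel_left, Finset.mul_sum]
      simp only [add_right_comm m _ 1]
  _ ≤ 8 * (2 / (m + 1)) := by
      gcongr
      exact sum_Ioo_inv_sq_le m _
  _ ≤ 16 := by
      have : (2 : ℝ) / (m + 1) ≤ 2 := div_le_self zero_le_two (by linarith [m.cast_nonneg (α := ℝ)])
      linarith

/-- The value on `T_m` of the quadrature rule with nodes `x` and weights `w`. The index is an
integer so that `T_{-m} = T_m` can be used. -/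
noncomputable def chebQuad {ι : Type*} [Fintype ι] (x w : ι → ℝ) (m : ℤ) : ℝ :=
  ∑ k, w k * (Chebyshev.T ℝ m).eval (x k)

section ChebQuad

variable {ι : Type*} [Fintype ι] {x w : ι → ℝ}

lemma chebQuad_neg (x w : ι → ℝ) (m : ℤ) : chebQuad x w (-m) = chebQuad x w m := by
  simp only [chebQuad, Chebyshev.T_neg]

lemma abs_chebQuad_le (hx : ∀ k, x k ∈ Set.Icc (-1) 1) (hw : ∀ k, 0 ≤ w k) (m : ℤ) :
    |chebQuad x w m| ≤ ∑ k, w k := by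
  refine (Finset.abs_sum_le_sum_abs _ _).trans (Finset.sum_le_sum fun k _ => ?_)
  rw [abs_mul, abs_of_nonneg (hw k)]
  exact mul_le_of_le_one_right (hw k)
    (Chebyshev.abs_eval_T_real_le_one m (abs_le.mpr (hx k)))

lemma abs_chebQuad_add_le_abs_chebQuad_sub (hx : ∀ k, x k ∈ Set.Icc (-1) 1) (hw : ∀ k, 0 ≤ w k)
    (N m : ℤ) :
    |chebQuad x w (N + m)| ≤
      |chebQuad x w (N - m)| + 2 * ∑ k, w k * |(Chebyshev.T ℝ N).eval (x k)| := by
  have hsum : chebQuad x w (N + m) = -chebQuad x w (N - m) +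
      2 * ∑ k, w k * ((Chebyshev.T ℝ N).eval (x k) * (Chebyshev.T ℝ m).eval (x k)) := by
    rw [chebQuad, chebQuad, Finset.mul_sum, ← Finset.sum_neg_distrib, ← Finset.sum_add_distrib]
    refine Finset.sum_congr rfl fun k _ => ?_
    have h := congrArg (eval (x k)) (Chebyshev.T_mul_T ℝ N m)
    simp only [eval_mul, eval_add, eval_ofNat] at h
    linear_combination -w k * h
  rw [hsum, ← abs_neg (chebQuad x w (N - m))]
  refine (abs_add_le _ _).trans (add_le_add_right ?_ _)
  rw [abs_mul, abs_two]
  gcongr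
  refine (Finset.abs_sum_le_sum_abs _ _).trans (Finset.sum_le_sum fun k _ => ?_)
  rw [abs_mul, abs_mul, abs_of_nonneg (hw k)]
  exact mul_le_mul_of_nonneg_left (mul_le_of_le_one_right (abs_nonneg _)
    (Chebyshev.abs_eval_T_real_le_one m (abs_le.mpr (hx k)))) (hw k)

lemma abs_chebQuad_two_mul_mul_add_le (hx : ∀ k, x k ∈ Set.Icc (-1) 1) (hw : ∀ k, 0 ≤ w k)
    (N m : ℤ) (j : ℕ) :
    |chebQuad x w (2 * N * j + m)| ≤
      |chebQuad x w m| + 2 * j * ∑ k, w k * |(Chebyshev.T ℝ N).eval (x k)| := by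
  induction j with
  | zero => simp
  | succ j ih =>
    have h := abs_chebQuad_add_le_abs_chebQuad_sub hx hw N (2 * N * j + m + N)
    rw [show N - (2 * N * j + m + N) = -(2 * N * j + m) by ring, chebQuad_neg] at h
    rw [show 2 * N * (j + 1 : ℕ) + m = N + (2 * N * j + m + N) by push_cast; ring]
    push_cast
    linarith

lemma sum_range_two_mul_abs_chebQuad_le (hx : ∀ k, x k ∈ Set.Icc (-1) 1) (hw : ∀ k, 0 ≤ w k)
    (N : ℕ) :
    ∑ r ∈ Finset.range (2 * N), |chebQuad x w r| ≤
      2 * ∑ r ∈ Finset.range (N + 1), |chebQuad x w r| +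
        2 * N * ∑ k, w k * |(Chebyshev.T ℝ N).eval (x k)| := by
  set ε := ∑ k, w k * |(Chebyshev.T ℝ N).eval (x k)|
  have hlow : ∑ r ∈ Finset.range N, |chebQuad x w r| ≤
      ∑ r ∈ Finset.range (N + 1), |chebQuad x w r| :=
    Finset.sum_le_sum_of_subset_of_nonneg (Finset.range_subset_range.mpr N.le_succ)
      fun _ _ _ => abs_nonneg _
  have hhigh : ∑ r ∈ Finset.range N, |chebQuad x w (N + r : ℕ)| ≤
      ∑ r ∈ Finset.range (N + 1), |chebQuad x w r| + 2 * N * ε := calc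
    ∑ r ∈ Finset.range N, |chebQuad x w (N + r : ℕ)|
      ≤ ∑ r ∈ Finset.range N, (|chebQuad x w (N - r : ℕ)| + 2 * ε) := by
        refine Finset.sum_le_sum fun r hr => ?_
        rw [Nat.cast_sub (Finset.mem_range.mp hr).le, Nat.cast_add]
        exact abs_chebQuad_add_le_abs_chebQuad_sub hx hw N r
    _ = ∑ r ∈ Finset.range N, |chebQuad x w (N - r : ℕ)| + 2 * N * ε := by
        rw [Finset.sum_add_distrib, Finset.sum_const, Finset.card_range, nsmul_eq_mul]
        ring
    _ ≤ ∑ r ∈ Finset.range (N + 1), |chebQuad x w (N - r : ℕ)| + 2 * N * ε := by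
        rw [Finset.sum_range_succ]
        linarith [abs_nonneg (chebQuad x w (N - N : ℕ))]
    _ = ∑ r ∈ Finset.range (N + 1), |chebQuad x w r| + 2 * N * ε := by
        rw [Finset.sum_flip fun r : ℕ => |chebQuad x w r|]
  rw [two_mul N, Finset.sum_range_add]
  linarith

theorem sum_range_abs_chebQuad_two_mul_mul_add_le (hx : ∀ k, x k ∈ Set.Icc (-1) 1)
    (hw : ∀ k, 0 ≤ w k) (N j : ℕ) :
    ∑ r ∈ Finset.range (2 * N), |chebQuad x w (2 * N * j + r : ℕ)| ≤
      2 * ∑ r ∈ Finset.range (N + 1), |chebQuad x w r| +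
        (2 + 4 * j) * (N * ∑ k, w k * |(Chebyshev.T ℝ N).eval (x k)|) := by
  set ε := ∑ k, w k * |(Chebyshev.T ℝ N).eval (x k)|
  calc ∑ r ∈ Finset.range (2 * N), |chebQuad x w (2 * N * j + r : ℕ)|
      ≤ ∑ r ∈ Finset.range (2 * N), (|chebQuad x w r| + 2 * j * ε) := by
        refine Finset.sum_le_sum fun r _ => ?_
        exact_mod_cast abs_chebQuad_two_mul_mul_add_le hx hw N r j
    _ = ∑ r ∈ Finset.range (2 * N), |chebQuad x w r| + 2 * N * (2 * j * ε) := by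
        rw [Finset.sum_add_distrib, Finset.sum_const, Finset.card_range, nsmul_eq_mul]
        push_cast
        rfl
    _ ≤ _ := by linarith [sum_range_two_mul_abs_chebQuad_le hx hw N]

end ChebQuad

namespace IsGaussRule

variable {n : ℕ} {x w : Fin n → ℝ}

lemma pos (h : IsGaussRule x w) : 0 < n := by
  rcases n.eq_zero_or_pos with rfl | hn
  · simpa using h.sum_weight
  · exact hn

lemma chebQuad_eq_polyIntegral (h : IsGaussRule x w) {m : ℕ} (hm : m ≤ 2 * n - 1) :
    chebQuad x w m = polyIntegral (Chebyshev.T ℝ m) :=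
  h.exact_of_natDegree_le _ (by simpa using hm)

lemma sum_abs_chebQuad_le (h : IsGaussRule x w) :
    ∑ r ∈ Finset.range (2 * n + 2), |chebQuad x w r| ≤ 20 := by
  have hexact : ∑ r ∈ Finset.range (2 * n), |chebQuad x w r| ≤ 16 := by
    refine (Finset.sum_congr rfl fun r hr => ?_).trans_le (sum_abs_polyIntegral_T_le 0 (2 * n))
    rw [zero_add, h.chebQuad_eq_polyIntegral (Nat.le_sub_one_of_lt (Finset.mem_range.mp hr))]
  have hle : ∀ m, |chebQuad x w m| ≤ 2 := fun m =>
    h.sum_weight ▸ abs_chebQuad_le h.mem_Icc (fun k => (h.weight_pos k).le) m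
  rw [Finset.sum_range_succ, Finset.sum_range_succ]
  linarith [hle (2 * n : ℕ), hle (2 * n + 1 : ℕ)]

/-- `T_m` and `-T_{m + 2(2n+1)}` almost agree at the nodes, so the errors grow only slowly from one
block of length `2(2n+1)` to the next. -/
theorem sum_abs_polyIntegral_T_sub_chebQuad_le (h : IsGaussRule x w) (j : ℕ) :
    ∑ r ∈ Finset.range (2 * (2 * n + 1)),
      |polyIntegral (Chebyshev.T ℝ (2 * (2 * n + 1) * j + r : ℕ)) -
        chebQuad x w (2 * (2 * n + 1) * j + r : ℕ)| ≤ 80 * (1 + log n) * (j + 1) := by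
  have hn : (1 : ℝ) ≤ n := by exact_mod_cast h.pos
  have hlog : 0 ≤ log n := log_nonneg hn
  set ε := ∑ k, w k * |(Chebyshev.T ℝ (2 * n + 1 : ℕ)).eval (x k)| with hε
  have hε_nonneg : 0 ≤ ε :=
    Finset.sum_nonneg fun k _ => mul_nonneg (h.weight_pos k).le (abs_nonneg _)
  have hNε : ((2 * n + 1 : ℕ) : ℝ) * ε ≤ 12 * (1 + log n) := calc
    ((2 * n + 1 : ℕ) : ℝ) * ε ≤ 3 * n * ε := by
      gcongr
      push_cast
      linarith
    _ ≤ 12 * (1 + log n) := by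
      have hnε : n * ε ≤ 4 * (1 + log n) := by
        rw [hε]
        exact_mod_cast h.natCast_mul_sum_weight_mul_abs_eval_T_le
      linarith
  calc _ ≤ ∑ r ∈ Finset.range (2 * (2 * n + 1)),
        (|polyIntegral (Chebyshev.T ℝ (2 * (2 * n + 1) * j + r : ℕ))| +
          |chebQuad x w (2 * (2 * n + 1) * j + r : ℕ)|) :=
        Finset.sum_le_sum fun r _ => abs_sub _ _
    _ ≤ 16 + (2 * 20 + (2 + 4 * j) * (12 * (1 + log n))) := by
        rw [Finset.sum_add_distrib]
        gcongr
        · exact sum_abs_polyIntegral_T_le _ _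
        · refine (sum_range_abs_chebQuad_two_mul_mul_add_le h.mem_Icc
            (fun k => (h.weight_pos k).le) (2 * n + 1) j).trans ?_
          gcongr
          exact h.sum_abs_chebQuad_le
    _ ≤ 80 * (1 + log n) * (j + 1) := by nlinarith [mul_nonneg hlog j.cast_nonneg]

end IsGaussRule

/-! ### Chebyshev expansions -/

lemma intervalIntegral_neg_self_eq {E : Type*} [NormedAddCommGroup E] [NormedSpace ℝ E]
    {h : ℝ → E} (hh : Continuous h) (a : ℝ) :
    ∫ t in -a..a, h t = ∫ t in 0..a, (h t + h (-t)) := by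
  have hneg : Continuous fun t => h (-t) := hh.comp continuous_neg
  rw [intervalIntegral.integral_add (hh.intervalIntegrable _ _)
      (hneg.intervalIntegrable _ _), intervalIntegral.integral_comp_neg h,
    neg_zero, add_comm, intervalIntegral.integral_add_adjacent_intervals
      (hh.intervalIntegrable _ _) (hh.intervalIntegrable _ _)]

lemma fourier_add_fourier_neg (m : ℤ) (t : ℝ) :
    fourier m (t : AddCircle (2 * π)) + fourier (-m) (t : AddCircle (2 * π)) =
      ((2 * cos (m * t) : ℝ) : ℂ) := by
  have hphase : 2 * π * Complex.I * m * t / (2 * π : ℝ) = ((m * t : ℝ) : ℂ) * Complex.I := by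
    have := Complex.ofReal_ne_zero.mpr pi_ne_zero
    push_cast
    field_simp
  rw [fourier_neg, Complex.add_conj, fourier_coe_apply, hphase, Complex.exp_ofReal_mul_I_re]

/-- The function `θ ↦ f (cos θ)` on the circle `ℝ / 2πℤ`; its Fourier series is the Chebyshev
expansion of `f`. -/
noncomputable def cosLift (f : ℝ → ℝ) : AddCircle (2 * π) → ℂ :=
  (cos_periodic.comp fun t => (f t : ℂ)).lift

lemma cosLift_coe (f : ℝ → ℝ) (θ : ℝ) : cosLift f θ = f (cos θ) := rfl

section CosLift

variable {f : ℝ → ℝ}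

lemma continuous_cosLift (hf : ContinuousOn f (Set.Icc (-1) 1)) : Continuous (cosLift f) :=
  continuous_quot_lift _ (Complex.continuous_ofReal.comp
    (hf.comp_continuous continuous_cos fun t => cos_mem_Icc t))

local instance : Fact (0 < 2 * π) := ⟨two_pi_pos⟩

lemma fourierCoeff_cosLift (hf : ContinuousOn f (Set.Icc (-1) 1)) (m : ℤ) :
    fourierCoeff (cosLift f) m = ((chebCoeff f m.natAbs / 2 : ℝ) : ℂ) := by
  have hcont : Continuous fun t : ℝ => fourier (-m) (t : AddCircle (2 * π)) • cosLift f t :=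
    ((fourier (-m)).continuous.smul (continuous_cosLift hf)).comp (AddCircle.continuous_mk' _)
  have hfold : ∀ t : ℝ, fourier (-m) (t : AddCircle (2 * π)) • cosLift f t +
      fourier (-m) ((-t : ℝ) : AddCircle (2 * π)) • cosLift f (-t : ℝ) =
      ((2 * (f (cos t) * cos (m.natAbs * t)) : ℝ) : ℂ) := by
    intro t
    have hreflect : fourier (-m) ((-t : ℝ) : AddCircle (2 * π)) =
        fourier m (t : AddCircle (2 * π)) := by
      rw [fourier_apply, fourier_apply, AddCircle.coe_neg, neg_smul_neg]
    have habs : cos (m.natAbs * t) = cos (m * t) := by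
      rcases abs_choice (m : ℝ) with h | h <;> simp [Nat.cast_natAbs, h]
    rw [cosLift_coe, cosLift_coe, cos_neg, hreflect, ← add_smul, add_comm,
      fourier_add_fourier_neg, habs, smul_eq_mul, ← Complex.ofReal_mul]
    congr 1
    ring
  rw [fourierCoeff_eq_intervalIntegral _ m (-π), show -π + 2 * π = π by ring,
    intervalIntegral_neg_self_eq hcont]
  simp_rw [hfold]
  rw [intervalIntegral.integral_ofReal, intervalIntegral.integral_const_mul, chebCoeff,
    Complex.real_smul, ← Complex.ofReal_mul]
  congr 1
  field_simp

/-- The term `m = 0` enters with weight one, twice its weight in the usual expansion. -/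
theorem hasSum_chebCoeff_mul_cos (hf : ContinuousOn f (Set.Icc (-1) 1))
    (ha : Summable (chebCoeff f)) (θ : ℝ) :
    HasSum (fun m : ℕ => chebCoeff f m * cos (m * θ)) (f (cos θ) + chebCoeff f 0 / 2) := by
  have hsummable : Summable (fourierCoeff (cosLift f)) := by
    have h : Summable fun m : ℕ => ((chebCoeff f m / 2 : ℝ) : ℂ) :=
      Complex.summable_ofReal.mpr (ha.div_const 2)
    apply Summable.of_nat_of_neg <;>
      simpa only [fourierCoeff_cosLift hf, Int.natAbs_neg, Int.natAbs_natCast] using h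
  have hfourier := (has_pointwise_sum_fourier_series_of_summable (f := ⟨_, continuous_cosLift hf⟩)
    hsummable (θ : AddCircle (2 * π))).nat_add_neg
  rw [← Complex.hasSum_ofReal]
  convert! hfourier using 1
  · ext m
    rw [ContinuousMap.coe_mk, fourierCoeff_cosLift hf, fourierCoeff_cosLift hf, Int.natAbs_neg,
      Int.natAbs_natCast, ← smul_add, fourier_add_fourier_neg, smul_eq_mul, ← Complex.ofReal_mul,
      Int.cast_natCast]
    congr 1
    ring
  · simp [fourierCoeff_cosLift hf, cosLift_coe]

lemma hasSum_chebCoeff_mul_eval_T (hf : ContinuousOn f (Set.Icc (-1) 1))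
    (ha : Summable (chebCoeff f)) {t : ℝ} (ht : t ∈ Set.Icc (-1) 1) :
    HasSum (fun m : ℕ => chebCoeff f m * (Chebyshev.T ℝ m).eval t) (f t + chebCoeff f 0 / 2) := by
  have h := hasSum_chebCoeff_mul_cos hf ha (arccos t)
  simp only [← Int.cast_natCast (R := ℝ), ← Chebyshev.T_real_cos, cos_arccos ht.1 ht.2] at h
  exact h

end CosLift

/-! ### Convergence rate -/

/-- The error on `[-1, 1]` of the quadrature rule with nodes `x` and weights `w`. -/
noncomputable def quadError {ι : Type*} [Fintype ι] (x w : ι → ℝ) (f : ℝ → ℝ) : ℝ :=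
  (∫ t in (-1 : ℝ)..1, f t) - ∑ k, w k * f (x k)

lemma uIoc_neg_one_one_subset_Icc : Set.uIoc (-1 : ℝ) 1 ⊆ Set.Icc (-1) 1 :=
  Set.uIoc_subset_uIcc.trans_eq (Set.uIcc_of_le (by norm_num))

lemma hasSum_quadError {ι : Type*} [Fintype ι] {x w : ι → ℝ} {F : ℕ → ℝ → ℝ} {g : ℝ → ℝ}
    {bound : ℕ → ℝ} (hx : ∀ k, x k ∈ Set.Icc (-1) 1) (hF : ∀ m, Continuous (F m))
    (hbound : ∀ m, ∀ t ∈ Set.Icc (-1) 1, |F m t| ≤ bound m) (hsum : Summable bound)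
    (hg : ∀ t ∈ Set.Icc (-1) 1, HasSum (F · t) (g t)) :
    HasSum (fun m => quadError x w (F m)) (quadError x w g) := by
  refine HasSum.sub ?_ (hasSum_sum fun k _ => (hg (x k) (hx k)).mul_left (w k))
  exact intervalIntegral.hasSum_integral_of_dominated_convergence (fun m _ => bound m)
    (fun m => (hF m).aestronglyMeasurable)
    (fun m => .of_forall fun t ht => hbound m t (uIoc_neg_one_one_subset_Icc ht))
    (.of_forall fun _ _ => hsum) intervalIntegrable_const
    (.of_forall fun t ht => hg t (uIoc_neg_one_one_subset_Icc ht))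

lemma abs_le_tsum_of_hasSum_of_sum_block_le {u c : ℕ → ℝ} {e : ℝ} {B : ℕ} (hB : B ≠ 0)
    (hu : HasSum u e) (hc : Summable c)
    (hblock : ∀ j, ∑ r ∈ Finset.range B, |u (B * j + r)| ≤ c j) : |e| ≤ ∑' j, c j := by
  have hpartial : ∀ J, ∑ m ∈ Finset.range (B * J), |u m| ≤ ∑ j ∈ Finset.range J, c j := by
    intro J
    induction J with
    | zero => simp
    | succ J ih =>
      rw [Nat.mul_succ, Finset.sum_range_add, Finset.sum_range_succ]
      exact add_le_add ih (hblock J)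
  have hc_nonneg : ∀ j, 0 ≤ c j := fun j =>
    (Finset.sum_nonneg fun _ _ => abs_nonneg _).trans (hblock j)
  have hblocks : Filter.Tendsto (fun J => B * J) Filter.atTop Filter.atTop :=
    Filter.tendsto_id.const_mul_atTop' (Nat.pos_of_ne_zero hB)
  refine le_of_tendsto (hu.tendsto_sum_nat.comp hblocks).abs (.of_forall fun J => ?_)
  exact (Finset.abs_sum_le_sum_abs _ _).trans
    ((hpartial J).trans (hc.sum_le_tsum _ fun j _ => hc_nonneg j))

lemma summable_of_abs_le_mul_rpow {a : ℕ → ℝ} {A s : ℝ} (hs : 0 < s)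
    (ha : ∀ m : ℕ, 1 ≤ m → |a m| ≤ A * (m : ℝ) ^ (-s - 1)) : Summable a := by
  refine Summable.of_norm_bounded_eventually_nat
    ((summable_nat_rpow.mpr (by linarith : -s - 1 < -1)).mul_left A) ?_
  filter_upwards [Filter.eventually_ge_atTop 1] with m hm using ha m hm

namespace IsGaussRule

variable {n : ℕ} {x w : Fin n → ℝ} {A s : ℝ}

theorem hasSum_chebCoeff_mul (h : IsGaussRule x w) {f : ℝ → ℝ}
    (hf : ContinuousOn f (Set.Icc (-1) 1)) (ha : Summable (chebCoeff f)) :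
    HasSum (fun m : ℕ => chebCoeff f m * (polyIntegral (Chebyshev.T ℝ m) - chebQuad x w m))
      (quadError x w f) := by
  have hsum := hasSum_quadError (w := w)
    (F := fun (m : ℕ) t => chebCoeff f m * (Chebyshev.T ℝ m).eval t) h.mem_Icc
    (fun m => continuous_const.mul (Chebyshev.T ℝ (m : ℕ)).continuous)
    (fun m t ht => (abs_mul _ _).trans_le (mul_le_of_le_one_right (abs_nonneg _)
      (Chebyshev.abs_eval_T_real_le_one m (abs_le.mpr ht)))) ha.abs
    (fun t ht => hasSum_chebCoeff_mul_eval_T hf ha ht)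
  have hint : IntervalIntegrable f MeasureTheory.volume (-1) 1 :=
    ContinuousOn.intervalIntegrable (by rwa [Set.uIcc_of_le (by norm_num)])
  convert! hsum using 1
  · ext m
    rw [quadError, intervalIntegral.integral_const_mul, polyIntegral_apply, chebQuad, mul_sub,
      Finset.mul_sum]
    simp only [mul_left_comm]
  · rw [quadError, quadError, intervalIntegral.integral_add hint intervalIntegrable_const]
    simp only [mul_add, Finset.sum_add_distrib, ← Finset.sum_mul, h.sum_weight,
      intervalIntegral.integral_const, smul_eq_mul]
    ring

lemma abs_mul_polyIntegral_T_sub_chebQuad_le (h : IsGaussRule x w) {a : ℕ → ℝ} (hA : 0 ≤ A)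
    (hs : -1 ≤ s) (ha : ∀ m : ℕ, 1 ≤ m → |a m| ≤ A * (m : ℝ) ^ (-s - 1)) {m j : ℕ}
    (hmj : 2 * (2 * n + 1) * j ≤ m) :
    |a m * (polyIntegral (Chebyshev.T ℝ m) - chebQuad x w m)| ≤
      A * n ^ (-s - 1) * ((j : ℝ) + 1) ^ (-s - 1) *
        |polyIntegral (Chebyshev.T ℝ m) - chebQuad x w m| := by
  have hn := h.pos
  rcases Nat.lt_or_ge m (2 * n) with hm | hm
  · rw [h.chebQuad_eq_polyIntegral (Nat.le_sub_one_of_lt hm)]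
    simp
  have hmn : n * (j + 1) ≤ m := by nlinarith
  rw [abs_mul]
  gcongr
  calc |a m| ≤ A * (m : ℝ) ^ (-s - 1) := ha m (by omega)
    _ ≤ A * ((n : ℝ) * (j + 1)) ^ (-s - 1) := by
        refine mul_le_mul_of_nonneg_left ?_ hA
        exact rpow_le_rpow_of_nonpos (by positivity) (by exact_mod_cast hmn) (by linarith)
    _ = A * n ^ (-s - 1) * ((j : ℝ) + 1) ^ (-s - 1) := by
        rw [mul_rpow n.cast_nonneg (by positivity), mul_assoc]

theorem abs_quadError_le (h : IsGaussRule x w) {f : ℝ → ℝ} (hs : 1 < s)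
    (hf : ContinuousOn f (Set.Icc (-1) 1)) (hA : 0 ≤ A)
    (ha : ∀ m : ℕ, 1 ≤ m → |chebCoeff f m| ≤ A * (m : ℝ) ^ (-s - 1)) :
    |quadError x w f| ≤
      80 * A * (∑' j : ℕ, ((j : ℝ) + 1) ^ (-s)) * n ^ (-s - 1) * (1 + log n) := by
  have hzeta : Summable fun j : ℕ => ((j : ℝ) + 1) ^ (-s) := by
    exact_mod_cast (summable_nat_add_iff 1).mpr (summable_nat_rpow.mpr (neg_lt_neg hs))
  have hblock : ∀ j : ℕ, ∑ r ∈ Finset.range (2 * (2 * n + 1)),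
      |chebCoeff f (2 * (2 * n + 1) * j + r) *
        (polyIntegral (Chebyshev.T ℝ (2 * (2 * n + 1) * j + r : ℕ)) -
          chebQuad x w (2 * (2 * n + 1) * j + r : ℕ))| ≤
      80 * A * n ^ (-s - 1) * (1 + log n) * ((j : ℝ) + 1) ^ (-s) := by
    intro j
    have hj : (0 : ℝ) < j + 1 := by positivity
    refine (Finset.sum_le_sum fun r _ => h.abs_mul_polyIntegral_T_sub_chebQuad_le hA
      (by linarith) ha (Nat.le_add_right _ r)).trans ?_
    rw [← Finset.mul_sum]
    calc _ ≤ A * n ^ (-s - 1) * ((j : ℝ) + 1) ^ (-s - 1) * (80 * (1 + log n) * (j + 1)) := by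
          gcongr
          exact h.sum_abs_polyIntegral_T_sub_chebQuad_le j
      _ = _ := by
          rw [rpow_sub_one hj.ne']
          field_simp
  have hle := abs_le_tsum_of_hasSum_of_sum_block_le (by omega)
    (h.hasSum_chebCoeff_mul hf (summable_of_abs_le_mul_rpow (by linarith) ha))
    (hzeta.mul_left _) hblock
  rw [tsum_mul_left] at hle
  linarith

end IsGaussRule

theorem gauss_rate_log_general (s : ℝ) (hs : 1 < s) (f : ℝ → ℝ)
    (hf : ContinuousOn f (Set.Icc (-1) 1))
    (hXs : ∃ A : ℝ, ∀ m : ℕ, 1 ≤ m → |chebCoeff f m| ≤ A * (m : ℝ) ^ (-s - 1)) :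
    ∃ C > 0, ∀ n : ℕ, 2 ≤ n → ∀ x w : Fin n → ℝ, IsGaussRule x w →
      |quadError x w f| ≤ C * (n : ℝ) ^ (-s - 1) * log n := by
  obtain ⟨A, ha⟩ := hXs
  have hA : 0 ≤ A := by simpa using (abs_nonneg _).trans (ha 1 le_rfl)
  set Z := ∑' j : ℕ, ((j : ℝ) + 1) ^ (-s)
  have hZ : 0 ≤ Z := tsum_nonneg fun j => by positivity
  refine ⟨240 * A * Z + 1, by positivity, fun n hn x w h => ?_⟩
  have hlog : 1 + log n ≤ 3 * log n := by
    have : log 2 ≤ log n := log_le_log two_pos (by exact_mod_cast hn)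
    linarith [log_two_gt_d9]
  have hlog_nonneg : 0 ≤ log n := log_natCast_nonneg n
  calc |quadError x w f| ≤ 80 * A * Z * n ^ (-s - 1) * (1 + log n) :=
        h.abs_quadError_le hs hf hA ha
    _ ≤ 80 * A * Z * n ^ (-s - 1) * (3 * log n) := by gcongr
    _ = 240 * A * Z * (n : ℝ) ^ (-s - 1) * log n := by ring
    _ ≤ (240 * A * Z + 1) * (n : ℝ) ^ (-s - 1) * log n := by
        gcongr
        exact le_add_of_nonneg_right zero_le_one

end

/-- If `f` is continuous on `[-1,1]` and of class `X^s` with `s ≥ 2`, then the error of the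
`n`-point Gauss rule is `O(n^{-s-1} log n)`. -/
theorem gauss_rate_log (s : ℝ) (hs : 2 ≤ s) (f : ℝ → ℝ)
    (hf : ContinuousOn f (Set.Icc (-1) 1))
    (hXs : ∃ A : ℝ, ∀ m : ℕ, 1 ≤ m → |chebCoeff f m| ≤ A * (m : ℝ) ^ (-s - 1)) :
    ∃ C > 0, ∀ n : ℕ, 2 ≤ n → ∀ x w : Fin n → ℝ,
      (∀ k, x k ∈ Set.Icc (-1:ℝ) 1) → (∀ k, 0 < w k) →
      (∀ p : Polynomial ℝ, p.natDegree ≤ 2 * n - 1 →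
        ∑ k : Fin n, w k * p.eval (x k) = ∫ t in (-1:ℝ)..1, p.eval t) →
      |(∫ t in (-1:ℝ)..1, f t) - ∑ k : Fin n, w k * f (x k)| ≤ C * (n : ℝ) ^ (-s - 1) * Real.log n := by
  obtain ⟨C, hC, hrate⟩ := gauss_rate_log_general s (by linarith) f hf hXs
  exact ⟨C, hC, fun n hn x w hx hw hexact => hrate n hn x w ⟨hx, hw, hexact⟩⟩
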